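/- Let n be an even positive integer and Θ an invertible real skew-symmetric n×n matrix. For all Schwartz functions f, g ∈ 𝒮(ℝ^n, ℂ) and every coordinate direction j ∈ {1, …, n}, the function f ⋆_Θ g is differentiable and ∂_j(f ⋆_Θ g) = (∂_j f) ⋆_Θ g + f ⋆_Θ (∂_j g). -/

import Mathlib

open MeasureTheory Real

/-- The Moyal product of two functions on `ℝ^n`, for an invertible deformation
matrix `Θ`. -/
noncomputable def moyal (n : ℕ) (Θ : Matrix (Fin n) (Fin n) ℝ)
    (f g : (Fin n → ℝ) → ℂ) : (Fin n → ℝ) → ℂ := fun x =>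
  (((π ^ n * |Θ.det|)⁻¹ : ℝ) : ℂ) *
    ∫ u : Fin n → ℝ, ∫ v : Fin n → ℝ,
      f (x + u) * g (x + v) *
        Complex.exp (-2 * Complex.I * ((∑ i, u i * Θ⁻¹.mulVec v i : ℝ) : ℂ))

/-! Translations commute with `⋆_Θ`, so `f ⋆_Θ g` at `x` is the integral of `f (x + u) g (x + v)`
against a kernel in `(u, v)` which does not depend on `x`. As this kernel is bounded and all
translates `h (y + ·)` of a Schwartz function `h`, for `y` near `x`, lie below a common integrable
function, one may differentiate in `x` under the integral sign; the product rule for the integrand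
is the Leibniz rule. -/

open Topology
open scoped SchwartzMap LineDeriv ENNReal MatrixGroups

/-- The family `Φ y`, for `y` near `x`, has a common integrable majorant. This is the hypothesis of
the theorems on differentiation under the integral sign. -/
def DominatedNear {X P F : Type*} [TopologicalSpace X] [MeasurableSpace P] [NormedAddCommGroup F]
    (Φ : X → P → F) (ρ : Measure P) (x : X) : Prop :=
  ∃ B : P → ℝ, Integrable B ρ ∧ ∀ᶠ y in 𝓝 x, ∀ p, ‖Φ y p‖ ≤ B p

namespace DominatedNear

section Topological

variable {X P Q F F₁ F₂ : Type*} [TopologicalSpace X] [MeasurableSpace P] [MeasurableSpace Q]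
  [NormedAddCommGroup F] [NormedAddCommGroup F₁] [NormedAddCommGroup F₂]
  {ρ : Measure P} {σ : Measure Q} {x : X}

theorem integrable {Φ : X → P → F} (hΦ : DominatedNear Φ ρ x)
    (hm : AEStronglyMeasurable (Φ x) ρ) : Integrable (Φ x) ρ := by
  obtain ⟨B, hB, hΦB⟩ := hΦ
  exact hB.mono' hm (.of_forall hΦB.self_of_nhds)

theorem add {Φ Ψ : X → P → F} (hΦ : DominatedNear Φ ρ x) (hΨ : DominatedNear Ψ ρ x) :
    DominatedNear (fun y p => Φ y p + Ψ y p) ρ x := by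
  obtain ⟨A, hA, hΦA⟩ := hΦ
  obtain ⟨B, hB, hΨB⟩ := hΨ
  refine ⟨fun p => A p + B p, hA.add hB, ?_⟩
  filter_upwards [hΦA, hΨB] with y hΦ hΨ p
  exact norm_add_le_of_le (hΦ p) (hΨ p)

theorem smul_of_memLp_top {𝕜 : Type*} [NormedField 𝕜] [NormedSpace 𝕜 F] {K : P → 𝕜}
    {Φ : X → P → F} (hK : MemLp K ∞ ρ) (hΦ : DominatedNear Φ ρ x) :
    DominatedNear (fun y p => K p • Φ y p) ρ x := by
  obtain ⟨B, hB, hΦB⟩ := hΦ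
  refine ⟨fun p => ‖K p‖ * B p, hB.smul_of_top_right hK.norm, ?_⟩
  filter_upwards [hΦB] with y hy p
  rw [norm_smul]
  gcongr
  exact hy p

theorem bilinear_prod [NormedSpace ℝ F] [NormedSpace ℝ F₁] [NormedSpace ℝ F₂]
    (L : F₁ →L[ℝ] F₂ →L[ℝ] F) {Φ : X → P → F₁} {Ψ : X → Q → F₂}
    (hΦ : DominatedNear Φ ρ x) (hΨ : DominatedNear Ψ σ x) :
    DominatedNear (fun y (p : P × Q) => L (Φ y p.1) (Ψ y p.2)) (ρ.prod σ) x := by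
  obtain ⟨A, hA, hΦA⟩ := hΦ
  obtain ⟨B, hB, hΨB⟩ := hΨ
  refine ⟨fun p => ‖L‖ * (A p.1 * B p.2), (hA.mul_prod hB).const_mul _, ?_⟩
  filter_upwards [hΦA, hΨB] with y hΦ hΨ p
  have hA₀ : 0 ≤ A p.1 := (norm_nonneg _).trans (hΦ p.1)
  calc ‖L (Φ y p.1) (Ψ y p.2)‖ ≤ ‖L‖ * ‖Φ y p.1‖ * ‖Ψ y p.2‖ := L.le_opNorm₂ _ _
    _ = ‖L‖ * (‖Φ y p.1‖ * ‖Ψ y p.2‖) := mul_assoc _ _ _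
    _ ≤ ‖L‖ * (A p.1 * B p.2) := by gcongr; exacts [hΦ _, hΨ _]

end Topological

theorem hasFDerivAt_integral {E P F : Type*} [NormedAddCommGroup E] [NormedSpace ℝ E]
    [MeasurableSpace P] [NormedAddCommGroup F] [NormedSpace ℝ F] {ρ : Measure P}
    {Φ : E → P → F} {Φ' : E → P → E →L[ℝ] F} {x : E}
    (hΦ' : DominatedNear Φ' ρ x) (hm' : AEStronglyMeasurable (Φ' x) ρ)
    (hm : ∀ y, AEStronglyMeasurable (Φ y) ρ) (hΦ : Integrable (Φ x) ρ)
    (hd : ∀ p y, HasFDerivAt (fun z => Φ z p) (Φ' y p) y) :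
    HasFDerivAt (fun y => ∫ p, Φ y p ∂ρ) (∫ p, Φ' x p ∂ρ) x := by
  obtain ⟨B, hB, hΦB⟩ := hΦ'
  exact hasFDerivAt_integral_of_dominated_of_fderiv_le hΦB (.of_forall hm) hΦ hm'
    (.of_forall fun p _ hy => hy p) hB (.of_forall fun p y _ => hd p y)

end DominatedNear

section Schwartz

variable {E F : Type*} [NormedAddCommGroup E]

theorem one_add_norm_le_mul_one_add_norm_add (y u : E) :
    1 + ‖u‖ ≤ (1 + ‖y‖) * (1 + ‖y + u‖) := by
  have hu : ‖u‖ ≤ ‖y‖ + ‖y + u‖ := by simpa using norm_add_le (-y) (y + u)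
  nlinarith [mul_nonneg (norm_nonneg y) (norm_nonneg (y + u))]

variable [NormedSpace ℝ E] [NormedAddCommGroup F] [NormedSpace ℝ F]

theorem exists_norm_schwartz_add_le (f : 𝓢(E, F)) (k : ℕ) :
    ∃ C, 0 ≤ C ∧ ∀ y u, ‖f (y + u)‖ ≤ C * (1 + ‖y‖) ^ k * (1 + ‖u‖) ^ (-(k : ℝ)) := by
  obtain ⟨C, hC⟩ : ∃ C, ∀ z, (1 + ‖z‖) ^ k * ‖f z‖ ≤ C :=
    ⟨_, by simpa only [norm_iteratedFDeriv_zero] using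
      SchwartzMap.one_add_le_sup_seminorm_apply (𝕜 := ℝ) (m := (k, 0)) le_rfl le_rfl f⟩
  have hC₀ : 0 ≤ C := le_trans (by positivity) (hC 0)
  refine ⟨C, hC₀, fun y u => ?_⟩
  rw [Real.rpow_neg (by positivity), Real.rpow_natCast, ← div_eq_mul_inv,
    le_div_iff₀ (by positivity)]
  calc ‖f (y + u)‖ * (1 + ‖u‖) ^ k
      ≤ ‖f (y + u)‖ * ((1 + ‖y‖) * (1 + ‖y + u‖)) ^ k := by
        gcongr; exact one_add_norm_le_mul_one_add_norm_add y u
    _ = (1 + ‖y + u‖) ^ k * ‖f (y + u)‖ * (1 + ‖y‖) ^ k := by rw [mul_pow]; ring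
    _ ≤ C * (1 + ‖y‖) ^ k := by gcongr; exact hC _

theorem dominatedNear_schwartz_add [MeasurableSpace E] (f : 𝓢(E, F)) (μ : Measure E)
    [μ.HasTemperateGrowth] (x : E) : DominatedNear (fun y u => f (y + u)) μ x := by
  obtain ⟨C, hC₀, hC⟩ := exists_norm_schwartz_add_le f μ.integrablePower
  refine ⟨_, μ.integrable_pow_neg_integrablePower.const_mul
    (C * (1 + (‖x‖ + 1)) ^ μ.integrablePower), ?_⟩
  have hball : ∀ᶠ y in 𝓝 x, ‖y‖ < ‖x‖ + 1 :=
    (continuous_norm.tendsto x).eventually_lt_const (lt_add_one _)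
  filter_upwards [hball] with y hy u
  refine (hC y u).trans ?_
  gcongr

end Schwartz

section KernelProduct

variable {𝕜 E F F₁ F₂ : Type*} [NormedField 𝕜] [NormedAddCommGroup E] [MeasurableSpace E]
  [NormedAddCommGroup F] [NormedSpace ℝ F] [NormedSpace 𝕜 F]
  [NormedAddCommGroup F₁] [NormedSpace ℝ F₁] [NormedAddCommGroup F₂] [NormedSpace ℝ F₂]

/-- The translation-covariant product of `f` and `g` with kernel `K`, where values are multiplied
by the bilinear map `L`. The double integral is taken over the product space, so that one can
differentiate under a single integral sign. -/
noncomputable def kernelProduct (K : E × E → 𝕜) (L : F₁ →L[ℝ] F₂ →L[ℝ] F) (μ : Measure E)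
    (f : E → F₁) (g : E → F₂) (x : E) : F :=
  ∫ p, K p • L (f (x + p.1)) (g (x + p.2)) ∂μ.prod μ

variable {μ : Measure E} {K : E × E → 𝕜}

theorem aestronglyMeasurable_kernel_smul [BorelSpace E] [SecondCountableTopology E]
    {ρ : Measure (E × E)} (hK : AEStronglyMeasurable K ρ) (L : F₁ →L[ℝ] F₂ →L[ℝ] F)
    {f : E → F₁} {g : E → F₂} (hf : Continuous f) (hg : Continuous g) (x : E) :
    AEStronglyMeasurable (fun p => K p • L (f (x + p.1)) (g (x + p.2))) ρ := by
  have hfg : Continuous fun p : E × E => L (f (x + p.1)) (g (x + p.2)) := by fun_prop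
  exact hK.smul hfg.aestronglyMeasurable

variable [NormedSpace ℝ E] [μ.HasTemperateGrowth]

theorem dominatedNear_kernel_smul_schwartz (hK : MemLp K ∞ (μ.prod μ))
    (L : F₁ →L[ℝ] F₂ →L[ℝ] F) (f : 𝓢(E, F₁)) (g : 𝓢(E, F₂)) (x : E) :
    DominatedNear (fun y p => K p • L (f (y + p.1)) (g (y + p.2))) (μ.prod μ) x :=
  .smul_of_memLp_top hK <|
    (dominatedNear_schwartz_add f μ x).bilinear_prod L (dominatedNear_schwartz_add g μ x)

variable [BorelSpace E] [SecondCountableTopology E]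

theorem integrable_kernel_smul_schwartz (hK : MemLp K ∞ (μ.prod μ))
    (L : F₁ →L[ℝ] F₂ →L[ℝ] F) (f : 𝓢(E, F₁)) (g : 𝓢(E, F₂)) (x : E) :
    Integrable (fun p => K p • L (f (x + p.1)) (g (x + p.2))) (μ.prod μ) :=
  (dominatedNear_kernel_smul_schwartz hK L f g x).integrable
    (aestronglyMeasurable_kernel_smul hK.1 L f.continuous g.continuous x)

variable [SMulCommClass ℝ 𝕜 F]

theorem kernelProduct_precompR_apply (hK : MemLp K ∞ (μ.prod μ))
    (L : F₁ →L[ℝ] F₂ →L[ℝ] F) (f : 𝓢(E, F₁)) (g : 𝓢(E, E →L[ℝ] F₂)) (x w : E) :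
    kernelProduct K (L.precompR E) μ f g x w = kernelProduct K L μ f (fun y => g y w) x :=
  ContinuousLinearMap.integral_apply (integrable_kernel_smul_schwartz hK _ f g x) w

theorem kernelProduct_precompL_apply (hK : MemLp K ∞ (μ.prod μ))
    (L : F₁ →L[ℝ] F₂ →L[ℝ] F) (f : 𝓢(E, E →L[ℝ] F₁)) (g : 𝓢(E, F₂)) (x w : E) :
    kernelProduct K (L.precompL E) μ f g x w = kernelProduct K L μ (fun y => f y w) g x :=
  ContinuousLinearMap.integral_apply (integrable_kernel_smul_schwartz hK _ f g x) w

theorem hasFDerivAt_kernelProduct (hK : MemLp K ∞ (μ.prod μ))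
    (L : F₁ →L[ℝ] F₂ →L[ℝ] F) (f : 𝓢(E, F₁)) (g : 𝓢(E, F₂)) (x : E) :
    HasFDerivAt (kernelProduct K L μ f g)
      (kernelProduct K (L.precompR E) μ f (fderiv ℝ g) x +
        kernelProduct K (L.precompL E) μ (fderiv ℝ f) g x) x := by
  let f' := SchwartzMap.fderivCLM ℝ E F₁ f
  let g' := SchwartzMap.fderivCLM ℝ E F₂ g
  have hR := integrable_kernel_smul_schwartz hK (L.precompR E) f g' x
  have hL := integrable_kernel_smul_schwartz hK (L.precompL E) f' g x
  have hd (p : E × E) (y : E) : HasFDerivAt (fun z => K p • L (f (z + p.1)) (g (z + p.2)))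
      (K p • L.precompR E (f (y + p.1)) (g' (y + p.2)) +
        K p • L.precompL E (f' (y + p.1)) (g (y + p.2))) y := by
    rw [← smul_add]
    have hf : HasFDerivAt (fun z => f (z + p.1)) (f' (y + p.1)) y :=
      (hasFDerivAt_comp_add_right _).2 (f.hasFDerivAt _)
    have hg : HasFDerivAt (fun z => g (z + p.2)) (g' (y + p.2)) y :=
      (hasFDerivAt_comp_add_right _).2 (g.hasFDerivAt _)
    exact (L.hasFDerivAt_of_bilinear hf hg).const_smul (K p)
  have hdom := (dominatedNear_kernel_smul_schwartz hK (L.precompR E) f g' x).add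
    (dominatedNear_kernel_smul_schwartz hK (L.precompL E) f' g x)
  have hsum : kernelProduct K (L.precompR E) μ f (fderiv ℝ g) x +
        kernelProduct K (L.precompL E) μ (fderiv ℝ f) g x =
      ∫ p, K p • L.precompR E (f (x + p.1)) (g' (x + p.2)) +
        K p • L.precompL E (f' (x + p.1)) (g (x + p.2)) ∂μ.prod μ := (integral_add hR hL).symm
  rw [hsum]
  exact hdom.hasFDerivAt_integral (hR.1.add hL.1)
    (aestronglyMeasurable_kernel_smul hK.1 L f.continuous g.continuous)
    (integrable_kernel_smul_schwartz hK L f g x) hd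

theorem fderiv_kernelProduct_apply (hK : MemLp K ∞ (μ.prod μ))
    (L : F₁ →L[ℝ] F₂ →L[ℝ] F) (f : 𝓢(E, F₁)) (g : 𝓢(E, F₂)) (x w : E) :
    fderiv ℝ (kernelProduct K L μ f g) x w =
      kernelProduct K L μ (∂_{w} f : 𝓢(E, F₁)) g x +
        kernelProduct K L μ f (∂_{w} g : 𝓢(E, F₂)) x := by
  rw [(hasFDerivAt_kernelProduct hK L f g x).fderiv, add_comm, add_apply]
  exact congrArg₂ _ (kernelProduct_precompL_apply hK L (SchwartzMap.fderivCLM ℝ E F₁ f) g x w)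
    (kernelProduct_precompR_apply hK L f (SchwartzMap.fderivCLM ℝ E F₂ g) x w)

end KernelProduct

section Moyal

variable {n : ℕ}

/-- The kernel of the Moyal product `⋆_Θ`, including its normalising constant. -/
noncomputable def moyalKernel (Θ : Matrix (Fin n) (Fin n) ℝ) (p : (Fin n → ℝ) × (Fin n → ℝ)) : ℂ :=
  (((π ^ n * |Θ.det|)⁻¹ : ℝ) : ℂ) *
    Complex.exp (-2 * Complex.I * ((∑ i, p.1 i * Θ⁻¹.mulVec p.2 i : ℝ) : ℂ))

theorem continuous_moyalKernel (Θ : Matrix (Fin n) (Fin n) ℝ) : Continuous (moyalKernel Θ) := by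
  unfold moyalKernel
  fun_prop

theorem norm_moyalKernel (Θ : Matrix (Fin n) (Fin n) ℝ) (p : (Fin n → ℝ) × (Fin n → ℝ)) :
    ‖moyalKernel Θ p‖ = (π ^ n * |Θ.det|)⁻¹ := by
  have hphase (t : ℝ) : ‖Complex.exp (-2 * Complex.I * t)‖ = 1 := by simp [Complex.norm_exp]
  rw [moyalKernel, norm_mul, hphase, mul_one, Complex.norm_of_nonneg (by positivity)]

theorem memLp_top_moyalKernel (Θ : Matrix (Fin n) (Fin n) ℝ)
    (ρ : Measure ((Fin n → ℝ) × (Fin n → ℝ))) : MemLp (moyalKernel Θ) ∞ ρ :=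
  memLp_top_of_bound (continuous_moyalKernel Θ).aestronglyMeasurable _
    (.of_forall fun p => (norm_moyalKernel Θ p).le)

theorem moyal_eq_kernelProduct (Θ : Matrix (Fin n) (Fin n) ℝ) (f g : 𝓢(Fin n → ℝ, ℂ)) :
    moyal n Θ f g = kernelProduct (moyalKernel Θ) (ContinuousLinearMap.mul ℝ ℂ) volume f g := by
  ext x
  have hint := integrable_kernel_smul_schwartz (memLp_top_moyalKernel Θ (volume.prod volume))
    (ContinuousLinearMap.mul ℝ ℂ) f g x
  rw [kernelProduct, integral_prod _ hint, moyal, ← integral_const_mul]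
  simp_rw [← integral_const_mul]
  congr! 4
  simp only [moyalKernel, ContinuousLinearMap.mul_apply', smul_eq_mul]
  ring

theorem moyal_leibniz_general (Θ : GL (Fin n) ℝ) (f g : 𝓢(Fin n → ℝ, ℂ)) :
    Differentiable ℝ (moyal n Θ f g) ∧
      ∀ x w, fderiv ℝ (moyal n Θ f g) x w =
        moyal n Θ (fun y => fderiv ℝ f y w) g x + moyal n Θ f (fun y => fderiv ℝ g y w) x := by
  have hK := memLp_top_moyalKernel (Θ : Matrix (Fin n) (Fin n) ℝ) (volume.prod volume)
  refine ⟨fun x => ?_, fun x w => ?_⟩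
  · rw [moyal_eq_kernelProduct]
    exact (hasFDerivAt_kernelProduct hK _ f g x).differentiableAt
  · change _ = moyal n Θ (∂_{w} f : 𝓢(Fin n → ℝ, ℂ)) g x +
      moyal n Θ f (∂_{w} g : 𝓢(Fin n → ℝ, ℂ)) x
    simp only [moyal_eq_kernelProduct]
    exact fderiv_kernelProduct_apply hK _ f g x w

end Moyal

/-- Leibniz rule for the Moyal product: `f ⋆_Θ g` is differentiable and
`∂_j (f ⋆_Θ g) = (∂_j f) ⋆_Θ g + f ⋆_Θ (∂_j g)`. -/
theorem moyal_leibniz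
    (n : ℕ) (hn : 0 < n) (he : Even n)
    (Θ : Matrix (Fin n) (Fin n) ℝ) (hskew : Θ.transpose = -Θ)
    (hdet : IsUnit Θ.det)
    (f g : SchwartzMap (Fin n → ℝ) ℂ) (j : Fin n) :
    (∀ x : Fin n → ℝ, DifferentiableAt ℝ (moyal n Θ ⇑f ⇑g) x) ∧
      ∀ x : Fin n → ℝ,
        fderiv ℝ (moyal n Θ ⇑f ⇑g) x (Pi.single j 1) =
          moyal n Θ (fun y => fderiv ℝ (⇑f) y (Pi.single j 1)) (⇑g) x +
            moyal n Θ (⇑f) (fun y => fderiv ℝ (⇑g) y (Pi.single j 1)) x := by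
  have h := moyal_leibniz_general (.mk'' Θ hdet) f g
  exact ⟨h.1, fun x => h.2 x (Pi.single j 1)⟩
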